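/- Let C be a type, δ a natural number, and f : Finset C → ℝ ∪ {−∞, +∞} a monotone objective (A ⊆ B implies f(A) ≤ f(B)) such that every finite subset A ⊆ C contains a subset B ⊆ A with f(B) = f(A) and |B| ≤ δ. Then for every finite S ⊆ C, the set {h ∈ S : f(S \ {h}) < f(S)} has at most δ elements. -/

import Mathlib

theorem mem_of_apply_erase_lt {C α : Type*} [DecidableEq C] [Preorder α] {f : Finset C → α}
    {S B : Finset C} {h : C} (hf : Monotone f) (hBS : B ⊆ S) (hB : f S ≤ f B)
    (hlt : f (S.erase h) < f S) : h ∈ B := by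
  by_contra hhB
  have hB_erase : B ⊆ S.erase h := Finset.subset_erase.mpr ⟨hBS, hhB⟩
  exact hlt.not_ge (hB.trans (hf hB_erase))

theorem stmt_11_general {C α : Type*} [DecidableEq C] [Preorder α] {δ : ℕ} {f : Finset C → α}
    (hf : Monotone f) {S : Finset C} (hS : ∃ B ⊆ S, f S ≤ f B ∧ B.card ≤ δ) :
    {h : C | h ∈ S ∧ f (S.erase h) < f S}.ncard ≤ δ := by
  obtain ⟨B, hBS, hB, hcard⟩ := hS
  have hsub : {h : C | h ∈ S ∧ f (S.erase h) < f S} ⊆ B :=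
    fun _ hh => mem_of_apply_erase_lt hf hBS hB hh.2
  calc
    _ ≤ (B : Set C).ncard := Set.ncard_le_ncard hsub B.finite_toSet
    _ = B.card := Set.ncard_coe_finset B
    _ ≤ δ := hcard

/-- Combinatorial core of the backward analysis of randomized incremental
algorithms for LP-type problems: if `f : Finset C → EReal` is monotone and
every finite subset `A` contains a subset `B ⊆ A` with `f B = f A` and
`|B| ≤ δ`, then for every finite `S ⊆ C` the set of constraints `h ∈ S`
whose removal strictly decreases the objective has at most `δ` elements. -/
theorem stmt_11 (C : Type*) [DecidableEq C] (δ : ℕ) (f : Finset C → EReal)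
    (hmono : ∀ A B : Finset C, A ⊆ B → f A ≤ f B)
    (hbasis : ∀ A : Finset C, ∃ B ⊆ A, f B = f A ∧ B.card ≤ δ) :
    ∀ S : Finset C, {h : C | h ∈ S ∧ f (S.erase h) < f S}.ncard ≤ δ := by
  intro S
  obtain ⟨B, hBS, hfB, hcard⟩ := hbasis S
  exact stmt_11_general hmono ⟨B, hBS, hfB.ge, hcard⟩
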